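/- Every compact operator on ℓ²(ℕ) belongs to the Toeplitz algebra T; that is, K ⊆ T. In particular, for all m, n ≥ 0 the rank-one operator x ↦ ⟨x, e_n⟩ e_m equals S^m (1 − S S*) S^{*n} and hence lies in T, and the closed linear span of these operators is all of K. -/

import Mathlib

/-!
The defect `1 - S S*` is the projection onto `ℂ e₀`, since `S* e₀ = 0` and `S* e_{n+1} = e_n`;
multiplying by `S ^ m` and `S* ^ n` moves `e₀ ⊗ e₀` to `e_m ⊗ e_n`, which therefore lies in the
Toeplitz algebra (`rankOne_eq_shift`).

For the density of the span of the `e_m ⊗ e_n` among the compact operators: by continuity and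
density of the span of the basis, the closed span `M` contains every rank-one operator `u ⊗ v`
(`rankOne_mem_closure`), hence every `P f` with `P` an orthogonal projection of finite rank. If `f`
is compact, then the image of the unit ball has a finite `ε`-net, and the projection `P` onto the
span of this net satisfies `‖f - P f‖ ≤ ε`, because `P y` is the best approximation to `y`. So
`f ∈ M`. The converse holds because rank-one operators are compact and the compact operators form
a closed subspace. As the Toeplitz algebra is closed, it contains `M`.
-/

open InnerProductSpace

section Toeplitz

variable {H : Type*} [NormedAddCommGroup H] [InnerProductSpace ℂ H] [CompleteSpace H]

/-- The closed linear span of the matrix units `e_m ⊗ e_n`. -/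
noncomputable def matrixUnitClosure (e : HilbertBasis ℕ ℂ H) : Submodule ℂ (H →L[ℂ] H) :=
  (Submodule.span ℂ (Set.range fun mn : ℕ × ℕ => rankOne ℂ (e mn.1) (e mn.2))).topologicalClosure

theorem star_shift_zero (e : HilbertBasis ℕ ℂ H) (S : H →L[ℂ] H)
    (hS : ∀ n : ℕ, S (e n) = e (n + 1)) : star S (e 0) = 0 := by
  apply e.repr.injective
  ext k
  rw [e.repr_apply_apply, ContinuousLinearMap.star_eq_adjoint,
    ContinuousLinearMap.adjoint_inner_right, hS, orthonormal_iff_ite.mp e.orthonormal]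
  simp

theorem star_shift_succ (e : HilbertBasis ℕ ℂ H) (S : H →L[ℂ] H)
    (hS : ∀ n : ℕ, S (e n) = e (n + 1)) (n : ℕ) : star S (e (n + 1)) = e n := by
  apply e.repr.injective
  ext k
  rw [e.repr_apply_apply, e.repr_apply_apply, ContinuousLinearMap.star_eq_adjoint,
    ContinuousLinearMap.adjoint_inner_right, hS, orthonormal_iff_ite.mp e.orthonormal,
    orthonormal_iff_ite.mp e.orthonormal]
  simp

theorem one_sub_shift_mul_star (e : HilbertBasis ℕ ℂ H) (S : H →L[ℂ] H)
    (hS : ∀ n : ℕ, S (e n) = e (n + 1)) : 1 - S * star S = rankOne ℂ (e 0) (e 0) := by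
  refine ContinuousLinearMap.ext_on (s := Set.range e) ?_ ?_
  · rw [Submodule.dense_iff_topologicalClosure_eq_top]
    exact e.dense_span
  · rintro _ ⟨n, rfl⟩
    cases n with
    | zero =>
      simp [star_shift_zero e S hS, e.orthonormal.norm_eq_one]
    | succ n =>
      simp [star_shift_succ e S hS, hS, orthonormal_iff_ite.mp e.orthonormal]

theorem shift_pow_apply_zero (e : HilbertBasis ℕ ℂ H) (S : H →L[ℂ] H)
    (hS : ∀ n : ℕ, S (e n) = e (n + 1)) (n : ℕ) : (S ^ n) (e 0) = e n := by
  induction n with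
  | zero => simp
  | succ n ih => rw [pow_succ', mul_apply_eq_comp, ih, hS]

theorem rankOne_eq_shift (e : HilbertBasis ℕ ℂ H) (S : H →L[ℂ] H)
    (hS : ∀ n : ℕ, S (e n) = e (n + 1)) (m n : ℕ) :
    rankOne ℂ (e m) (e n) = S ^ m * (1 - S * star S) * (star S) ^ n := by
  rw [one_sub_shift_mul_star e S hS, ContinuousLinearMap.mul_def, ContinuousLinearMap.mul_def,
    comp_rankOne, rankOne_comp, ← star_pow, ContinuousLinearMap.star_eq_adjoint,
    ContinuousLinearMap.adjoint_adjoint, shift_pow_apply_zero e S hS, shift_pow_apply_zero e S hS]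

/-- The sets of admissible `u` and of admissible `v` are closed subspaces, so it suffices to test
basis vectors. -/
theorem rankOne_mem_closure (e : HilbertBasis ℕ ℂ H) (u v : H) :
    rankOne ℂ u v ∈ matrixUnitClosure e := by
  have hcl : IsClosed (matrixUnitClosure e : Set (H →L[ℂ] H)) :=
    Submodule.isClosed_topologicalClosure _
  have key : ∀ N : Submodule ℂ H, IsClosed (N : Set H) → (∀ n, e n ∈ N) → ∀ x, x ∈ N := by
    intro N hN h x
    have hle : (Submodule.span ℂ (Set.range e)).topologicalClosure ≤ N :=
      Submodule.topologicalClosure_minimal _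
        (Submodule.span_le.mpr (Set.range_subset_iff.mpr h)) hN
    rw [e.dense_span] at hle
    exact hle trivial
  have h1 : ∀ (n : ℕ) (u : H), rankOne ℂ u (e n) ∈ matrixUnitClosure e := by
    intro n
    let L : H →L[ℂ] H →L[ℂ] H := (rankOne ℂ : H →L[ℂ] H →L⋆[ℂ] H →L[ℂ] H).flip (e n)
    refine key ((matrixUnitClosure e).comap L.toLinearMap) ?_ ?_
    · exact hcl.preimage L.continuous
    · intro m
      exact Submodule.le_topologicalClosure _ (Submodule.subset_span ⟨(m, n), rfl⟩)
  let L : H →L⋆[ℂ] H →L[ℂ] H := rankOne ℂ u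
  refine key ((matrixUnitClosure e).comap L.toLinearMap) ?_ (fun n => h1 n u) v
  exact hcl.preimage L.continuous

theorem starProjection_comp_mem_closure (e : HilbertBasis ℕ ℂ H) (f : H →L[ℂ] H)
    (V : Submodule ℂ H) [FiniteDimensional ℂ V] :
    V.starProjection ∘L f ∈ matrixUnitClosure e := by
  rw [(stdOrthonormalBasis ℂ V).starProjection_eq_sum_rankOne, ContinuousLinearMap.finsetSum_comp]
  refine Submodule.sum_mem _ fun i _ => ?_
  rw [rankOne_comp]
  exact rankOne_mem_closure e _ _

/-- A compact operator is a norm limit of its compressions `P f`, with `P` the projection onto the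
span of a finite `ε`-net of the image of the unit ball. -/
theorem IsCompactOperator.mem_matrixUnitClosure (e : HilbertBasis ℕ ℂ H) {f : H →L[ℂ] H}
    (hf : IsCompactOperator f) : f ∈ matrixUnitClosure e := by
  have hcl : IsClosed (matrixUnitClosure e : Set (H →L[ℂ] H)) :=
    Submodule.isClosed_topologicalClosure _
  rw [← SetLike.mem_coe, ← hcl.closure_eq, Metric.mem_closure_iff]
  intro ε hε
  obtain ⟨K, hK, hfK⟩ := IsCompactOperator.image_closedBall_subset_compact (f := f.toLinearMap) hf 1
  obtain ⟨t, ht, hKt⟩ := Metric.totallyBounded_iff.mp hK.totallyBounded (ε / 2) (half_pos hε)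
  have : FiniteDimensional ℂ (Submodule.span ℂ t) := FiniteDimensional.span_of_finite ℂ ht
  refine ⟨_, starProjection_comp_mem_closure e f (Submodule.span ℂ t), ?_⟩
  rw [dist_eq_norm]
  refine lt_of_le_of_lt ?_ (half_lt_self hε)
  refine ContinuousLinearMap.opNorm_le_of_unit_norm (half_pos hε).le fun x hx => ?_
  obtain ⟨y, hy, hxy⟩ := Set.mem_iUnion₂.mp (hKt (hfK ⟨x, by simp [hx], rfl⟩))
  have hmin : ‖f x - (Submodule.span ℂ t).starProjection (f x)‖ ≤ ‖f x - y‖ := by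
    rw [Submodule.starProjection_minimal]
    exact ciInf_le ⟨0, by rintro _ ⟨z, rfl⟩; positivity⟩
      (⟨y, Submodule.subset_span hy⟩ : Submodule.span ℂ t)
  rw [Metric.mem_ball, dist_eq_norm] at hxy
  exact hmin.trans hxy.le

theorem isCompactOperator_rankOne (u v : H) : IsCompactOperator (rankOne ℂ u v) := by
  have hu : IsCompactOperator (ContinuousLinearMap.toSpanSingleton ℂ u) :=
    isCompactOperator_of_locallyCompactSpace_rng _
  exact hu.comp_clm (innerSL ℂ v)

theorem mem_matrixUnitClosure_iff (e : HilbertBasis ℕ ℂ H) (f : H →L[ℂ] H) :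
    f ∈ matrixUnitClosure e ↔ IsCompactOperator f := by
  refine ⟨fun h => ?_, IsCompactOperator.mem_matrixUnitClosure e⟩
  have hle : matrixUnitClosure e ≤ compactOperator (RingHom.id ℂ) H H := by
    refine Submodule.topologicalClosure_minimal _ (Submodule.span_le.mpr ?_)
      isClosed_setOfPred_isCompactOperator
    rintro _ ⟨mn, rfl⟩
    exact isCompactOperator_rankOne _ _
  exact hle h

theorem matrixUnitClosure_subset_elemental (e : HilbertBasis ℕ ℂ H) (S : H →L[ℂ] H)
    (hS : ∀ n : ℕ, S (e n) = e (n + 1)) :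
    (matrixUnitClosure e : Set (H →L[ℂ] H)) ⊆ StarAlgebra.elemental ℂ S := by
  have hle : matrixUnitClosure e ≤
      Subalgebra.toSubmodule (StarAlgebra.elemental ℂ S).toSubalgebra := by
    refine Submodule.topologicalClosure_minimal _ (Submodule.span_le.mpr ?_)
      (StarAlgebra.elemental.isClosed ℂ S)
    rintro _ ⟨mn, rfl⟩
    have hmem : S ∈ StarAlgebra.elemental ℂ S := StarAlgebra.elemental.self_mem ℂ S
    change rankOne ℂ (e mn.1) (e mn.2) ∈ StarAlgebra.elemental ℂ S
    rw [rankOne_eq_shift e S hS]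
    exact mul_mem (mul_mem (pow_mem hmem _) (sub_mem (one_mem _) (mul_mem hmem (star_mem hmem))))
      (pow_mem (star_mem hmem) _)
  exact hle

end Toeplitz

/-- Every compact operator on `ℓ²(ℕ)` belongs to the Toeplitz algebra `T`;
in particular, for all `m, n ≥ 0` the rank-one operator `x ↦ ⟨e_n, x⟩ e_m` equals
`S^m (1 - S S*) S^{*n}` (hence lies in `T`), and the closed linear span of these rank-one
operators is all of `K`. -/
theorem statement18
    {H : Type*} [NormedAddCommGroup H] [InnerProductSpace ℂ H] [CompleteSpace H]
    (e : HilbertBasis ℕ ℂ H) (S : H →L[ℂ] H)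
    (hS : ∀ n : ℕ, S (e n) = e (n + 1)) :
    {f : H →L[ℂ] H | IsCompactOperator ⇑f} ⊆ (StarAlgebra.elemental ℂ S : Set (H →L[ℂ] H)) ∧
    (∀ m n : ℕ, ((innerSL ℂ (e n)).smulRight (e m) : H →L[ℂ] H) =
      S ^ m * (1 - S * star S) * (star S) ^ n) ∧
    {f : H →L[ℂ] H | IsCompactOperator ⇑f} =
      closure (Submodule.span ℂ
        (Set.range fun mn : ℕ × ℕ =>
          ((innerSL ℂ (e mn.2)).smulRight (e mn.1) : H →L[ℂ] H)) : Set (H →L[ℂ] H)) := by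
  refine ⟨fun f hf => ?_, rankOne_eq_shift e S hS, ?_⟩
  · exact matrixUnitClosure_subset_elemental e S hS ((mem_matrixUnitClosure_iff e f).mpr hf)
  · ext f
    exact (mem_matrixUnitClosure_iff e f).symm
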